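/- For every natural number k and every σ > 0 there exist constants c > 0 and C > 0, depending only on k and σ, with the following property: let τ ⊂ ℝ² be a nondegenerate triangle with vertices a₁, a₂, a₃ satisfying h_τ² ≤ σ·|τ|, let e = [a₁, a₂] be an edge of τ of length h_e, and let ψ_e = 4·λ₁·λ₂ be the edge bubble function of e (λ₁, λ₂ the barycentric coordinates associated with a₁, a₂). Then for every polynomial function φ of degree at most k on e (that is, φ = q ∘ γ⁻¹ for the affine parametrization γ of e and a univariate polynomial q of degree ≤ k) there exists a polynomial function w : ℝ² → ℝ of total degree at most k + 2 such that w agrees with ψ_e·φ on e, w vanishes on the two edges [a₁,a₃] and [a₂,a₃], and c·h_e^{1/2}·‖φ‖_{0,e} ≤ ‖w‖_{0,τ} ≤ C·h_e^{1/2}·‖φ‖_{0,e}, where ‖·‖_{0,e} is the L² norm on e with respect to one-dimensional Hausdorff measure and ‖·‖_{0,τ} is the L² norm on τ with respect to Lebesgue measure. -/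

import Mathlib

open MeasureTheory

/-!
Affine pullback to a reference triangle reduces both `L²` norms to positive definite quadratic forms
in `q`, which ranges over the finite-dimensional space of polynomials of degree at most `k`; two
such forms are equivalent, with constants depending only on `k`. The pullback multiplies the squared
norm on the edge by `h_e` and the squared norm on the triangle by a determinant `D`. By shape
regularity `h_e² ≤ h_τ² ≲ D`; conversely Hadamard's inequality `D ≤ h_e h_τ` first yields
`h_τ ≲ h_e` and then `D ≲ h_e²`.
-/

section QuadraticForm

theorem continuous_quadraticForm {V : Type*} [NormedAddCommGroup V] [NormedSpace ℝ V]
    [FiniteDimensional ℝ V] (Q : QuadraticForm ℝ V) : Continuous Q := by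
  have hQ : ⇑Q = fun v => (QuadraticMap.associated Q).toContinuousBilinearMap v v := by
    ext v
    simp [QuadraticMap.associated_eq_self_apply]
  rw [hQ]
  fun_prop

theorem exists_quadraticForm_le_mul_of_normedSpace {V : Type*} [NormedAddCommGroup V]
    [NormedSpace ℝ V] [FiniteDimensional ℝ V] (Q : QuadraticForm ℝ V) {Q' : QuadraticForm ℝ V}
    (hQ' : Q'.PosDef) : ∃ C : ℝ, 0 < C ∧ ∀ v, Q v ≤ C * Q' v := by
  have ne_zero : ∀ u ∈ Metric.sphere (0 : V) 1, u ≠ 0 :=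
    fun u hu => ne_zero_of_mem_unit_sphere ⟨u, hu⟩
  obtain ⟨C, hC⟩ := (isCompact_sphere (0 : V) 1).bddAbove_image
    ((continuous_quadraticForm Q).continuousOn.div (continuous_quadraticForm Q').continuousOn
      fun u hu => (hQ' u (ne_zero u hu)).ne')
  refine ⟨max C 1, by positivity, fun v => ?_⟩
  obtain rfl | hv := eq_or_ne v 0
  · simp
  have hsphere : ‖v‖⁻¹ • v ∈ Metric.sphere (0 : V) 1 := by simp [norm_smul, hv]
  have hratio : Q v / Q' v ≤ C := by
    simpa [QuadraticMap.map_smul, mul_div_mul_left, hv] using hC (Set.mem_image_of_mem _ hsphere)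
  exact (div_le_iff₀ (hQ' v hv)).mp (hratio.trans (le_max_left C 1))

variable {V : Type*} [AddCommGroup V] [Module ℝ V] [FiniteDimensional ℝ V]

theorem exists_quadraticForm_le_mul (Q : QuadraticForm ℝ V) {Q' : QuadraticForm ℝ V}
    (hQ' : Q'.PosDef) : ∃ C : ℝ, 0 < C ∧ ∀ v, Q v ≤ C * Q' v := by
  let e := (Module.finBasis ℝ V).equivFun
  obtain ⟨C, hC, hle⟩ := exists_quadraticForm_le_mul_of_normedSpace (Q.comp e.symm.toLinearMap)
    (Q' := Q'.comp e.symm.toLinearMap) fun u hu => hQ' _ (by simpa using hu)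
  exact ⟨C, hC, fun v => by simpa using hle (e v)⟩

theorem exists_quadraticForm_equiv {Q Q' : QuadraticForm ℝ V} (hQ : Q.PosDef) (hQ' : Q'.PosDef) :
    ∃ C : ℝ, 0 < C ∧ ∀ v, Q v ≤ C * Q' v ∧ Q' v ≤ C * Q v := by
  obtain ⟨C, hC, hle⟩ := exists_quadraticForm_le_mul Q hQ'
  obtain ⟨C', -, hle'⟩ := exists_quadraticForm_le_mul Q' hQ
  refine ⟨max C C', lt_max_of_lt_left hC, fun v => ⟨(hle v).trans ?_, (hle' v).trans ?_⟩⟩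
  · exact mul_le_mul_of_nonneg_right (le_max_left C C') (hQ'.nonneg v)
  · exact mul_le_mul_of_nonneg_right (le_max_right C C') (hQ.nonneg v)

end QuadraticForm

section SqIntegralForm

variable {X : Type*} [TopologicalSpace X] [T2Space X] [MeasurableSpace X] [BorelSpace X]
  (μ : Measure X) [IsFiniteMeasureOnCompacts μ] {K : Set X} (hK : IsCompact K)

/-- The squared `L²(K, μ)` norm, as a quadratic form on continuous functions. It depends on the
values on `K` only, so definiteness is a property of its restrictions to subspaces. -/
noncomputable def sqIntegralForm : QuadraticForm ℝ C(X, ℝ) :=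
  have integrable (f g : C(X, ℝ)) : IntegrableOn (fun x => f x * g x) K μ :=
    (f * g).continuous.continuousOn.integrableOn_compact hK
  LinearMap.BilinMap.toQuadraticMap <|
    LinearMap.mk₂ ℝ (fun f g => ∫ x in K, f x * g x ∂μ)
      (fun f f' g => by simpa [add_mul] using integral_add (integrable f g) (integrable f' g))
      (fun r f g => by simpa [mul_assoc] using integral_const_mul r _)
      (fun f g g' => by simpa [mul_add] using integral_add (integrable f g) (integrable f g'))
      (fun r f g => by simpa [mul_left_comm] using integral_const_mul r _)

theorem sqIntegralForm_apply (f : C(X, ℝ)) : sqIntegralForm μ hK f = ∫ x in K, f x ^ 2 ∂μ := by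
  simp [sqIntegralForm, sq]

variable [μ.IsOpenPosMeasure]

include hK in
theorem setIntegral_sq_pos {f : X → ℝ} (hf : Continuous f) {x : X}
    (hx : x ∈ closure (interior K)) (hfx : f x ≠ 0) : 0 < ∫ y in K, f y ^ 2 ∂μ := by
  rw [setIntegral_pos_iff_support_of_nonneg_ae (.of_forall fun y => sq_nonneg _)
    ((hf.pow 2).continuousOn.integrableOn_compact hK)]
  have hopen : IsOpen {y | f y ≠ 0} := isOpen_ne_fun hf continuous_const
  have hne : ({y | f y ≠ 0} ∩ interior K).Nonempty := mem_closure_iff.mp hx _ hopen hfx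
  exact ((hopen.inter isOpen_interior).measure_pos μ hne).trans_le <|
    measure_mono fun y hy => ⟨by simpa using hy.1, interior_subset hy.2⟩

theorem posDef_sqIntegralForm_comp {V : Type*} [AddCommGroup V] [Module ℝ V]
    (T : V →ₗ[ℝ] C(X, ℝ)) (hT : ∀ v ≠ 0, ∃ x ∈ closure (interior K), T v x ≠ 0) :
    ((sqIntegralForm μ hK).comp T).PosDef := by
  intro v hv
  obtain ⟨x, hx, hvx⟩ := hT v hv
  simpa [sqIntegralForm_apply] using setIntegral_sq_pos μ hK (T v).continuous hx hvx

end SqIntegralForm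

section ChangeOfVariables

theorem abs_det_le_prod_norm {n : ℕ} {E : Type*} [NormedAddCommGroup E] [InnerProductSpace ℝ E]
    (b : OrthonormalBasis (Fin n) ℝ E) (f : E →ₗ[ℝ] E) :
    |LinearMap.det f| ≤ ∏ i, ‖f (b i)‖ := by
  have : Fact (Module.finrank ℝ E = n) := ⟨by simp [Module.finrank_eq_card_basis b.toBasis]⟩
  have hdet : LinearMap.det f = b.toBasis.orientation.volumeForm (f ∘ b) := by
    rw [Orientation.volumeForm_robust _ b rfl, b.toBasis.det_comp, ← b.coe_toBasis,
      b.toBasis.det_self, mul_one]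
  simpa [hdet] using b.toBasis.orientation.abs_volumeForm_apply_le (f ∘ b)

variable {E F : Type*} [NormedAddCommGroup E] [NormedSpace ℝ E] [MeasurableSpace E] [BorelSpace E]
  [NormedAddCommGroup F] [NormedSpace ℝ F]

theorem addHaar_image_affineMap [FiniteDimensional ℝ E] (μ : Measure E) [μ.IsAddHaarMeasure]
    (f : E →ᵃ[ℝ] E) (s : Set E) : μ (f '' s) = ENNReal.ofReal |LinearMap.det f.linear| * μ s := by
  rw [f.decomp, ← Measure.addHaar_image_linearMap μ f.linear s]
  simp only [Pi.add_def, ← Set.image_image (· + f 0) f.linear, Set.image_add_right,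
    measure_preimage_add_right]

theorem setIntegral_image_affineMap [FiniteDimensional ℝ E] (μ : Measure E) [μ.IsAddHaarMeasure]
    (f : E →ᵃ[ℝ] E) {s : Set E} (hs : MeasurableSet s) (g : E → F) :
    ∫ x in f '' s, g x ∂μ = |LinearMap.det f.linear| • ∫ x in s, g (f x) ∂μ := by
  obtain hdet | hdet := eq_or_ne (LinearMap.det f.linear) 0
  · simp [hdet, setIntegral_measure_zero, addHaar_image_affineMap]
  have hinj : Function.Injective f :=
    f.linear_injective_iff.mp (f.linear.equivOfDetNeZero hdet).injective
  have hderiv : ∀ x ∈ s, HasFDerivWithinAt f f.linear.toContinuousLinearMap s x := fun x _ => by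
    rw [f.decomp]
    exact (f.linear.toContinuousLinearMap.hasFDerivAt.add_const (f 0)).hasFDerivWithinAt
  rw [integral_image_eq_integral_abs_det_fderiv_smul μ hs hderiv hinj.injOn, integral_smul]
  rfl

theorem hausdorffMeasure_restrict_segment (x y : E) :
    (μH[1] : Measure E).restrict (segment ℝ x y) =
      nndist x y • (volume.restrict (Set.Icc (0 : ℝ) 1)).map (AffineMap.lineMap x y) := by
  have hγ : Measurable (AffineMap.lineMap x y : ℝ → E) := AffineMap.lineMap_continuous.measurable
  ext s hs
  rw [Measure.restrict_apply hs, segment_eq_image_lineMap, Set.inter_comm,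
    ← Set.image_inter_preimage, hausdorffMeasure_lineMap_image, hausdorffMeasure_real,
    Set.inter_comm, Measure.smul_apply, Measure.map_apply hγ hs, Measure.restrict_apply (hγ hs)]

theorem setIntegral_segment_hausdorffMeasure (x y : E) (g : E → F) :
    ∫ z in segment ℝ x y, g z ∂μH[1] =
      dist x y • ∫ t in Set.Icc (0 : ℝ) 1, g (AffineMap.lineMap x y t) := by
  rw [hausdorffMeasure_restrict_segment, integral_smul_nnreal_measure]
  obtain rfl | hxy := eq_or_ne x y
  · simp
  · have hγ : Topology.IsClosedEmbedding (AffineMap.lineMap x y : ℝ → E) :=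
      (antilipschitzWith_lineMap hxy).isClosedEmbedding
        (lipschitzWith_lineMap x y).uniformContinuous
    rw [hγ.integral_map]
    rfl

end ChangeOfVariables

section Polynomial

theorem exists_mem_eval_ne_zero {R : Type*} [CommRing R] [IsDomain R] {s : Set R}
    (hs : s.Infinite) {q : Polynomial R} (hq : q ≠ 0) : ∃ t ∈ s, q.eval t ≠ 0 := by
  by_contra! hroot
  exact hq (q.eq_zero_of_infinite_isRoot (hs.mono hroot))

theorem totalDegree_aeval_le {R ι : Type*} [CommSemiring R] {m n : ℕ} {p : MvPolynomial ι R}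
    (hp : p.totalDegree ≤ m) {q : Polynomial R} (hq : q.natDegree ≤ n) :
    (Polynomial.aeval p q).totalDegree ≤ n * m := by
  rw [Polynomial.aeval_eq_sum_range]
  refine MvPolynomial.totalDegree_finsetSum_le fun i hi => ?_
  calc (q.coeff i • p ^ i).totalDegree
      ≤ (p ^ i).totalDegree := MvPolynomial.totalDegree_smul_le _ _
    _ ≤ i * p.totalDegree := MvPolynomial.totalDegree_pow _ _
    _ ≤ n * m := by
      gcongr
      exact (Finset.mem_range_succ_iff.mp hi).trans hq

variable {ι : Type*} [Fintype ι]

open scoped Classical in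
/-- An affine function on `ℝ^ι` as a polynomial in the coordinates. -/
noncomputable def affinePolynomial (l : EuclideanSpace ℝ ι →ᵃ[ℝ] ℝ) : MvPolynomial ι ℝ :=
  MvPolynomial.C (l 0) +
    ∑ i, MvPolynomial.C (l.linear (EuclideanSpace.single i 1)) * MvPolynomial.X i

theorem eval_affinePolynomial (l : EuclideanSpace ℝ ι →ᵃ[ℝ] ℝ) (x : EuclideanSpace ℝ ι) :
    MvPolynomial.eval x (affinePolynomial l) = l x := by
  classical
  rw [l.decomp]
  conv_rhs => rw [← (EuclideanSpace.basisFun ι ℝ).sum_repr x]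
  simp [affinePolynomial, mul_comm, add_comm]

theorem totalDegree_affinePolynomial_le (l : EuclideanSpace ℝ ι →ᵃ[ℝ] ℝ) :
    (affinePolynomial l).totalDegree ≤ 1 := by
  refine (MvPolynomial.totalDegree_add _ _).trans (max_le (by simp) ?_)
  refine MvPolynomial.totalDegree_finsetSum_le fun i _ => ?_
  exact (MvPolynomial.totalDegree_mul _ _).trans (by simp)

/-- The polynomial `ψ_e · P_e φ` of the paper: the edge bubble `4 l₀ l₁` times the extension of the
edge function `q` that is constant along the level lines of `l₁`. -/
noncomputable def bubbleExtension (l₀ l₁ : EuclideanSpace ℝ ι →ᵃ[ℝ] ℝ) (q : Polynomial ℝ) :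
    MvPolynomial ι ℝ :=
  MvPolynomial.C 4 * affinePolynomial l₀ * affinePolynomial l₁ *
    Polynomial.aeval (affinePolynomial l₁) q

variable (l₀ l₁ : EuclideanSpace ℝ ι →ᵃ[ℝ] ℝ)

theorem eval_bubbleExtension (q : Polynomial ℝ) (x : EuclideanSpace ℝ ι) :
    MvPolynomial.eval x (bubbleExtension l₀ l₁ q) = 4 * l₀ x * l₁ x * q.eval (l₁ x) := by
  have hq : MvPolynomial.eval x (Polynomial.aeval (affinePolynomial l₁) q) = q.eval (l₁ x) := by
    rw [← MvPolynomial.coe_aeval_eq_eval, RingHom.coe_coe, ← Polynomial.aeval_algHom_apply,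
      MvPolynomial.aeval_eq_eval, eval_affinePolynomial, Polynomial.coe_aeval_eq_eval]
  simp [bubbleExtension, eval_affinePolynomial, hq]

theorem totalDegree_bubbleExtension_le {q : Polynomial ℝ} {k : ℕ} (hq : q.natDegree ≤ k) :
    (bubbleExtension l₀ l₁ q).totalDegree ≤ k + 2 := by
  have h₀ := totalDegree_affinePolynomial_le l₀
  have h₁ := totalDegree_affinePolynomial_le l₁
  calc (bubbleExtension l₀ l₁ q).totalDegree
      ≤ (0 + 1 + 1) + k * 1 :=
        (MvPolynomial.totalDegree_mul _ _).trans <| add_le_add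
          ((MvPolynomial.totalDegree_mul _ _).trans <| add_le_add
            ((MvPolynomial.totalDegree_mul _ _).trans <| add_le_add
              (MvPolynomial.totalDegree_C _).le h₀) h₁)
          (totalDegree_aeval_le h₁ hq)
    _ = k + 2 := by ring

end Polynomial

section Simplex

/-- The simplex in `ℝⁿ` with vertices the origin and the standard basis vectors. -/
def referenceSimplex (n : ℕ) : Set (EuclideanSpace ℝ (Fin n)) :=
  convexHull ℝ (insert 0 (Set.range fun i => EuclideanSpace.single i 1))

theorem isCompact_referenceSimplex (n : ℕ) : IsCompact (referenceSimplex n) :=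
  ((Set.finite_range _).insert 0).isCompact_convexHull ℝ

theorem single_mem_referenceSimplex {n : ℕ} (i : Fin n) {t : ℝ} (ht : t ∈ Set.Icc (0 : ℝ) 1) :
    EuclideanSpace.single i t ∈ referenceSimplex n := by
  have hzero : 0 ∈ referenceSimplex n := subset_convexHull ℝ _ (by simp)
  have hone : EuclideanSpace.single i 1 ∈ referenceSimplex n := subset_convexHull ℝ _ (by simp)
  have hsmul : EuclideanSpace.single i t = t • EuclideanSpace.single i (1 : ℝ) := by
    ext j
    simp
  rw [hsmul]
  exact ((convex_convexHull ℝ _).starConvex hzero).smul_mem hone ht.1 ht.2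

theorem nonempty_interior_referenceSimplex (n : ℕ) : (interior (referenceSimplex n)).Nonempty := by
  have hbasis : ⇑(EuclideanSpace.basisFun (Fin n) ℝ).toBasis =
      fun i => EuclideanSpace.single i (1 : ℝ) := by
    ext1 i
    simp
  have hspan := (EuclideanSpace.basisFun (Fin n) ℝ).toBasis.span_eq
  rw [hbasis] at hspan
  rw [referenceSimplex, interior_convexHull_nonempty_iff_affineSpan_eq_top]
  apply SetLike.coe_injective
  rw [affineSpan_insert_zero, hspan]
  rfl

theorem closure_interior_referenceSimplex (n : ℕ) :
    closure (interior (referenceSimplex n)) = referenceSimplex n := by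
  have hconvex : Convex ℝ (referenceSimplex n) := convex_convexHull ℝ _
  rw [hconvex.closure_interior_eq_closure_of_nonempty_interior
    (nonempty_interior_referenceSimplex n), (isCompact_referenceSimplex n).isClosed.closure_eq]

theorem volume_referenceSimplex_pos (n : ℕ) : 0 < volume.real (referenceSimplex n) :=
  ENNReal.toReal_pos
    (Measure.measure_pos_of_nonempty_interior volume (nonempty_interior_referenceSimplex n)).ne'
    (isCompact_referenceSimplex n).measure_ne_top

variable {n : ℕ}

/-- The affine map taking the vertices `0, e₁, …, eₙ` of the reference simplex to
`a 0, a 1, …, a n`. -/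
noncomputable def simplexMap {V : Type*} [AddCommGroup V] [Module ℝ V] (a : Fin (n + 1) → V) :
    EuclideanSpace ℝ (Fin n) →ᵃ[ℝ] V :=
  ((EuclideanSpace.basisFun (Fin n) ℝ).toBasis.constr ℝ fun i => a i.succ - a 0).toAffineMap +
    AffineMap.const ℝ _ (a 0)

section Module

variable {V : Type*} [AddCommGroup V] [Module ℝ V] (a : Fin (n + 1) → V)

theorem simplexMap_apply (x : EuclideanSpace ℝ (Fin n)) :
    simplexMap a x = ∑ i, x i • (a i.succ - a 0) + a 0 := by
  simp [simplexMap, Module.Basis.constr_apply_fintype]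

theorem simplexMap_linear_single (i : Fin n) :
    (simplexMap a).linear (EuclideanSpace.single i 1) = a i.succ - a 0 := by
  simp [simplexMap, Module.Basis.constr_apply_fintype]

theorem simplexMap_image_referenceSimplex :
    simplexMap a '' referenceSimplex n = convexHull ℝ (Set.range a) := by
  have hzero : simplexMap a 0 = a 0 := by simp [simplexMap_apply]
  have hsingle : simplexMap a ∘ (fun i => EuclideanSpace.single i 1) = a ∘ Fin.succ := by
    ext1 i
    simp [simplexMap_apply]
  rw [referenceSimplex, AffineMap.image_convexHull, Set.image_insert_eq, ← Set.range_comp, hzero,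
    hsingle, Fin.range_fin_succ]
  rfl

theorem affineMap_apply_simplexMap (l : V →ᵃ[ℝ] ℝ) (x : EuclideanSpace ℝ (Fin n)) :
    l (simplexMap a x) = ∑ i, x i * (l (a i.succ) - l (a 0)) + l (a 0) := by
  have hlinear : ∀ i : Fin n, l.linear (a i.succ - a 0) = l (a i.succ) - l (a 0) :=
    fun i => l.linearMap_vsub _ _
  rw [simplexMap_apply, ← vadd_eq_add, l.map_vadd]
  simp [hlinear]

end Module

variable (a : Fin (n + 1) → EuclideanSpace ℝ (Fin n))

theorem setIntegral_convexHull_range {F : Type*} [NormedAddCommGroup F] [NormedSpace ℝ F]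
    (g : EuclideanSpace ℝ (Fin n) → F) :
    ∫ x in convexHull ℝ (Set.range a), g x =
      |LinearMap.det (simplexMap a).linear| • ∫ x in referenceSimplex n, g (simplexMap a x) := by
  rw [← simplexMap_image_referenceSimplex, setIntegral_image_affineMap volume _
    (isCompact_referenceSimplex n).measurableSet]

theorem volume_convexHull_range :
    volume.real (convexHull ℝ (Set.range a)) =
      |LinearMap.det (simplexMap a).linear| * volume.real (referenceSimplex n) := by
  simpa using setIntegral_convexHull_range a fun _ => (1 : ℝ)

theorem abs_det_simplexMap_le :
    |LinearMap.det (simplexMap a).linear| ≤ ∏ i : Fin n, dist (a 0) (a i.succ) := by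
  simpa [simplexMap_linear_single, dist_eq_norm'] using
    abs_det_le_prod_norm (EuclideanSpace.basisFun (Fin n) ℝ) (simplexMap a).linear

end Simplex

section ShapeRegular

theorem dist_le_diam_convexHull_range {ι V : Type*} [Finite ι] [NormedAddCommGroup V]
    [NormedSpace ℝ V] (a : ι → V) (i j : ι) :
    dist (a i) (a j) ≤ Metric.diam (convexHull ℝ (Set.range a)) :=
  Metric.dist_le_diam_of_mem (isBounded_convexHull.mpr (Set.finite_range a).isBounded)
    (subset_convexHull ℝ _ ⟨i, rfl⟩) (subset_convexHull ℝ _ ⟨j, rfl⟩)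

variable {n : ℕ} {a : Fin (n + 2) → EuclideanSpace ℝ (Fin (n + 1))} {κ : ℝ}

theorem dist_pow_le_mul_abs_det
    (hreg : Metric.diam (convexHull ℝ (Set.range a)) ^ (n + 1) ≤
      κ * |LinearMap.det (simplexMap a).linear|) :
    dist (a 0) (a 1) ^ (n + 1) ≤ κ * |LinearMap.det (simplexMap a).linear| :=
  (pow_le_pow_left₀ dist_nonneg (dist_le_diam_convexHull_range a 0 1) (n + 1)).trans hreg

theorem abs_det_simplexMap_le_dist_mul_diam_pow (a : Fin (n + 2) → EuclideanSpace ℝ (Fin (n + 1))) :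
    |LinearMap.det (simplexMap a).linear| ≤
      dist (a 0) (a 1) * Metric.diam (convexHull ℝ (Set.range a)) ^ n :=
  calc |LinearMap.det (simplexMap a).linear|
      ≤ dist (a 0) (a 1) * ∏ i : Fin n, dist (a 0) (a i.succ.succ) := by
        simpa [Fin.prod_univ_succ] using! abs_det_simplexMap_le a
    _ ≤ dist (a 0) (a 1) * ∏ _i : Fin n, Metric.diam (convexHull ℝ (Set.range a)) := by
        gcongr
        exact dist_le_diam_convexHull_range a 0 _
    _ = dist (a 0) (a 1) * Metric.diam (convexHull ℝ (Set.range a)) ^ n := by simp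

theorem diam_le_mul_dist (hκ : 0 ≤ κ)
    (hreg : Metric.diam (convexHull ℝ (Set.range a)) ^ (n + 1) ≤
      κ * |LinearMap.det (simplexMap a).linear|) :
    Metric.diam (convexHull ℝ (Set.range a)) ≤ κ * dist (a 0) (a 1) := by
  have hdet := abs_det_simplexMap_le_dist_mul_diam_pow a
  obtain hd | hd := (Metric.diam_nonneg (s := convexHull ℝ (Set.range a))).eq_or_lt
  · exact hd.ge.trans (by positivity)
  refine le_of_mul_le_mul_right ?_ (pow_pos hd n)
  calc Metric.diam (convexHull ℝ (Set.range a)) * Metric.diam (convexHull ℝ (Set.range a)) ^ n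
      = Metric.diam (convexHull ℝ (Set.range a)) ^ (n + 1) := (pow_succ' _ n).symm
    _ ≤ κ * (dist (a 0) (a 1) * Metric.diam (convexHull ℝ (Set.range a)) ^ n) :=
        hreg.trans (by gcongr)
    _ = κ * dist (a 0) (a 1) * Metric.diam (convexHull ℝ (Set.range a)) ^ n :=
        (mul_assoc _ _ _).symm

theorem abs_det_le_mul_dist_pow (hκ : 0 ≤ κ)
    (hreg : Metric.diam (convexHull ℝ (Set.range a)) ^ (n + 1) ≤
      κ * |LinearMap.det (simplexMap a).linear|) :
    |LinearMap.det (simplexMap a).linear| ≤ κ ^ n * dist (a 0) (a 1) ^ (n + 1) :=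
  calc |LinearMap.det (simplexMap a).linear|
      ≤ dist (a 0) (a 1) * Metric.diam (convexHull ℝ (Set.range a)) ^ n :=
        abs_det_simplexMap_le_dist_mul_diam_pow a
    _ ≤ dist (a 0) (a 1) * (κ * dist (a 0) (a 1)) ^ n := by
        gcongr
        exact diam_le_mul_dist hκ hreg
    _ = κ ^ n * dist (a 0) (a 1) ^ (n + 1) := by ring

end ShapeRegular

section ReferenceTriangle

/-- The map `q ↦ ψ_e · P_e q` on the reference triangle, where `e` is the edge from `0` to `e₁` and
the barycentric coordinates of its endpoints are `1 - x₁ - x₂` and `x₁`. -/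
noncomputable def referenceExtension :
    Polynomial ℝ →ₗ[ℝ] C(EuclideanSpace ℝ (Fin 2), ℝ) where
  toFun q := ⟨fun x => 4 * (1 - x 0 - x 1) * x 0 * q.eval (x 0), by fun_prop⟩
  map_add' p q := by
    ext x
    simp [mul_add]
  map_smul' r q := by
    ext x
    simp [mul_left_comm]

theorem referenceExtension_apply (q : Polynomial ℝ) (x : EuclideanSpace ℝ (Fin 2)) :
    referenceExtension q x = 4 * (1 - x 0 - x 1) * x 0 * q.eval (x 0) :=
  rfl

variable (k : ℕ)

theorem exists_referenceExtension_equiv :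
    ∃ C : ℝ, 0 < C ∧ ∀ q : Polynomial ℝ, q.natDegree ≤ k →
      ∫ x in referenceSimplex 2, referenceExtension q x ^ 2 ≤
        C * ∫ t in Set.Icc (0 : ℝ) 1, q.eval t ^ 2 ∧
      ∫ t in Set.Icc (0 : ℝ) 1, q.eval t ^ 2 ≤
        C * ∫ x in referenceSimplex 2, referenceExtension q x ^ 2 := by
  let P := Polynomial.degreeLT ℝ (k + 1)
  have hroot : ∀ q : P, q ≠ 0 → ∃ t ∈ Set.Ioo (0 : ℝ) 1, (q : Polynomial ℝ).eval t ≠ 0 :=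
    fun q hq => exists_mem_eval_ne_zero (Set.Ioo_infinite zero_lt_one) (by simpa using hq)
  have htriangle := posDef_sqIntegralForm_comp volume (isCompact_referenceSimplex 2)
    (referenceExtension.domRestrict P) fun q hq => by
      obtain ⟨t, ht, hqt⟩ := hroot q hq
      refine ⟨EuclideanSpace.single 0 t, ?_, ?_⟩
      · rw [closure_interior_referenceSimplex]
        exact single_mem_referenceSimplex 0 ⟨ht.1.le, ht.2.le⟩
      · simp [referenceExtension_apply, hqt, ht.1.ne', sub_ne_zero.mpr ht.2.ne']
  have hedge := posDef_sqIntegralForm_comp volume (isCompact_Icc (a := (0 : ℝ)) (b := 1))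
    (Polynomial.toContinuousMapAlgHom.toLinearMap.domRestrict P) fun q hq => by
      obtain ⟨t, ht, hqt⟩ := hroot q hq
      exact ⟨t, subset_closure (by simpa using ht), by simpa using hqt⟩
  obtain ⟨C, hC, hequiv⟩ := exists_quadraticForm_equiv htriangle hedge
  refine ⟨C, hC, fun q hq => ?_⟩
  have hqP : q ∈ P := Polynomial.mem_degreeLT.mpr <|
    Polynomial.degree_le_natDegree.trans_lt (by exact_mod_cast Nat.lt_succ_of_le hq)
  simpa [sqIntegralForm_apply] using hequiv ⟨q, hqP⟩

end ReferenceTriangle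

section Edge

section Module

variable {V : Type*} [AddCommGroup V] [Module ℝ V] {x y : V} {l : V →ᵃ[ℝ] ℝ}

theorem eqOn_zero_segment (hx : l x = 0) (hy : l y = 0) : Set.EqOn l 0 (segment ℝ x y) := by
  rw [segment_eq_image_lineMap]
  rintro _ ⟨t, -, rfl⟩
  simp [AffineMap.apply_lineMap, hx, hy]

theorem eq_eval_of_mem_segment {φ : V → ℝ} {q : Polynomial ℝ}
    (hφ : ∀ t ∈ Set.Icc (0 : ℝ) 1, φ (AffineMap.lineMap x y t) = q.eval t) (hx : l x = 0)
    (hy : l y = 1) {z : V} (hz : z ∈ segment ℝ x y) : φ z = q.eval (l z) := by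
  rw [segment_eq_image_lineMap] at hz
  obtain ⟨t, ht, rfl⟩ := hz
  rw [hφ t ht, AffineMap.apply_lineMap, hx, hy, AffineMap.lineMap_apply_ring]
  simp

end Module

theorem setIntegral_sq_edge {V : Type*} [NormedAddCommGroup V] [NormedSpace ℝ V]
    [MeasurableSpace V] [BorelSpace V] {x y : V} {φ : V → ℝ} {q : Polynomial ℝ}
    (hφ : ∀ t ∈ Set.Icc (0 : ℝ) 1, φ (AffineMap.lineMap x y t) = q.eval t) :
    ∫ z in segment ℝ x y, φ z ^ 2 ∂μH[1] =
      dist x y * ∫ t in Set.Icc (0 : ℝ) 1, q.eval t ^ 2 := by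
  rw [setIntegral_segment_hausdorffMeasure, smul_eq_mul]
  congr 1
  exact setIntegral_congr_fun measurableSet_Icc fun t ht => by simp [hφ t ht]

end Edge

section Triangle

theorem setIntegral_sq_bubbleExtension {a : Fin 3 → EuclideanSpace ℝ (Fin 2)}
    {L : Fin 3 → (EuclideanSpace ℝ (Fin 2) →ᵃ[ℝ] ℝ)}
    (hL : ∀ i j, L i (a j) = if i = j then 1 else 0) (q : Polynomial ℝ) :
    ∫ x in convexHull ℝ (Set.range a), MvPolynomial.eval x (bubbleExtension (L 0) (L 1) q) ^ 2 =
      |LinearMap.det (simplexMap a).linear| *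
        ∫ x in referenceSimplex 2, referenceExtension q x ^ 2 := by
  have hL₀ : ∀ x, L 0 (simplexMap a x) = 1 - x 0 - x 1 := fun x => by
    simp [affineMap_apply_simplexMap, hL]
    ring
  have hL₁ : ∀ x, L 1 (simplexMap a x) = x 0 := fun x => by
    simp [affineMap_apply_simplexMap, hL]
  rw [setIntegral_convexHull_range, smul_eq_mul]
  simp only [eval_bubbleExtension, referenceExtension_apply, hL₀, hL₁]

theorem exists_setIntegral_sq_bubbleExtension_equiv (k : ℕ) {σ : ℝ} (hσ : 0 < σ) :
    ∃ C : ℝ, 0 < C ∧ ∀ a : Fin 3 → EuclideanSpace ℝ (Fin 2),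
      Metric.diam (convexHull ℝ (Set.range a)) ^ 2 ≤
        σ * volume.real (convexHull ℝ (Set.range a)) →
      ∀ L : Fin 3 → (EuclideanSpace ℝ (Fin 2) →ᵃ[ℝ] ℝ),
        (∀ i j, L i (a j) = if i = j then 1 else 0) →
      ∀ q : Polynomial ℝ, q.natDegree ≤ k →
        dist (a 0) (a 1) ^ 2 * ∫ t in Set.Icc (0 : ℝ) 1, q.eval t ^ 2 ≤
          C * ∫ x in convexHull ℝ (Set.range a),
            MvPolynomial.eval x (bubbleExtension (L 0) (L 1) q) ^ 2 ∧
        ∫ x in convexHull ℝ (Set.range a),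
            MvPolynomial.eval x (bubbleExtension (L 0) (L 1) q) ^ 2 ≤
          C * (dist (a 0) (a 1) ^ 2 * ∫ t in Set.Icc (0 : ℝ) 1, q.eval t ^ 2) := by
  obtain ⟨C, hC, hequiv⟩ := exists_referenceExtension_equiv k
  let κ := σ * volume.real (referenceSimplex 2)
  have hκ : 0 < κ := mul_pos hσ (volume_referenceSimplex_pos 2)
  refine ⟨κ * C, mul_pos hκ hC, fun a hreg L hL q hq => ?_⟩
  rw [setIntegral_sq_bubbleExtension hL]
  have hreg' : Metric.diam (convexHull ℝ (Set.range a)) ^ 2 ≤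
      κ * |LinearMap.det (simplexMap a).linear| := by
    rw [volume_convexHull_range] at hreg
    linarith
  have hlower : dist (a 0) (a 1) ^ 2 ≤ κ * |LinearMap.det (simplexMap a).linear| :=
    dist_pow_le_mul_abs_det hreg'
  have hupper : |LinearMap.det (simplexMap a).linear| ≤ κ * dist (a 0) (a 1) ^ 2 := by
    simpa using abs_det_le_mul_dist_pow hκ.le hreg'
  obtain ⟨htriangle, hedge⟩ := hequiv q hq
  constructor
  · calc dist (a 0) (a 1) ^ 2 * ∫ t in Set.Icc (0 : ℝ) 1, q.eval t ^ 2
        ≤ κ * |LinearMap.det (simplexMap a).linear| *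
            (C * ∫ x in referenceSimplex 2, referenceExtension q x ^ 2) := by gcongr
      _ = _ := by ring
  · calc |LinearMap.det (simplexMap a).linear| *
          ∫ x in referenceSimplex 2, referenceExtension q x ^ 2
        ≤ κ * dist (a 0) (a 1) ^ 2 * (C * ∫ t in Set.Icc (0 : ℝ) 1, q.eval t ^ 2) := by gcongr
      _ = _ := by ring

end Triangle

/-- Extension-operator estimate (4.4): there are constants `c, C > 0` depending only on
the polynomial degree `k` and the shape-regularity constant `σ` such that for every
nondegenerate triangle `τ = convexHull {a 0, a 1, a 2} ⊂ ℝ²` with `h_τ² ≤ σ |τ|`,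
barycentric coordinates `L 0, L 1, L 2`, edge `e = [a 0, a 1]` of length
`h_e = dist (a 0) (a 1)` with edge bubble `ψ_e = 4 (L 0)(L 1)`, and every polynomial
function `φ` of degree at most `k` on `e` (i.e. `φ ∘ γ = q` on `[0,1]` for the affine
parametrization `γ = lineMap (a 0) (a 1)` and a univariate polynomial `q` of degree ≤ k),
there is a polynomial function `w` of total degree at most `k + 2` which agrees with
`ψ_e φ` on `e`, vanishes on the other two edges `[a 0, a 2]` and `[a 1, a 2]`, and
satisfies `c h_e^{1/2} ‖φ‖_{0,e} ≤ ‖w‖_{0,τ} ≤ C h_e^{1/2} ‖φ‖_{0,e}`, where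
`‖·‖_{0,e}` is taken with respect to the one-dimensional Hausdorff measure. -/
theorem edge_bubble_extension_estimate (k : ℕ) (σ : ℝ) (hσ : 0 < σ) :
    ∃ c : ℝ, 0 < c ∧ ∃ C : ℝ, 0 < C ∧
      ∀ (a : Fin 3 → EuclideanSpace ℝ (Fin 2)), AffineIndependent ℝ a →
      letI τ : Set (EuclideanSpace ℝ (Fin 2)) := convexHull ℝ (Set.range a)
      letI e : Set (EuclideanSpace ℝ (Fin 2)) := segment ℝ (a 0) (a 1)
      letI he : ℝ := dist (a 0) (a 1)
      Metric.diam τ ^ 2 ≤ σ * (volume τ).toReal →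
      ∀ (L : Fin 3 → (EuclideanSpace ℝ (Fin 2) →ᵃ[ℝ] ℝ)),
        (∀ i j, L i (a j) = if i = j then 1 else 0) →
      ∀ (φ : EuclideanSpace ℝ (Fin 2) → ℝ) (q : Polynomial ℝ), q.natDegree ≤ k →
        (∀ t ∈ Set.Icc (0 : ℝ) 1, φ (AffineMap.lineMap (a 0) (a 1) t) = q.eval t) →
        ∃ wp : MvPolynomial (Fin 2) ℝ, wp.totalDegree ≤ k + 2 ∧
          letI w : EuclideanSpace ℝ (Fin 2) → ℝ := fun x => MvPolynomial.eval (fun i => x i) wp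
          (∀ x ∈ e, w x = (4 * L 0 x * L 1 x) * φ x) ∧
          (∀ x ∈ segment ℝ (a 0) (a 2), w x = 0) ∧
          (∀ x ∈ segment ℝ (a 1) (a 2), w x = 0) ∧
          c * Real.sqrt he * Real.sqrt (∫ x in e, φ x ^ 2 ∂(μH[1])) ≤
            Real.sqrt (∫ x in τ, w x ^ 2) ∧
          Real.sqrt (∫ x in τ, w x ^ 2) ≤
            C * Real.sqrt he * Real.sqrt (∫ x in e, φ x ^ 2 ∂(μH[1])) := by
  obtain ⟨N, hN, hequiv⟩ := exists_setIntegral_sq_bubbleExtension_equiv k hσ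
  refine ⟨(√N)⁻¹, by positivity, √N, by positivity, fun a _ hreg L hL φ q hq hφ =>
    ⟨bubbleExtension (L 0) (L 1) q, totalDegree_bubbleExtension_le _ _ hq, fun x hx => ?_,
      fun x hx => ?_, fun x hx => ?_, ?_⟩⟩
  · rw [eq_eval_of_mem_segment hφ (l := L 1) (by simp [hL]) (by simp [hL]) hx]
    exact eval_bubbleExtension _ _ _ _
  · have hx₁ : L 1 x = 0 := eqOn_zero_segment (by simp [hL]) (by simp [hL]) hx
    exact (eval_bubbleExtension _ _ _ _).trans (by simp [hx₁])
  · have hx₀ : L 0 x = 0 := eqOn_zero_segment (by simp [hL]) (by simp [hL]) hx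
    exact (eval_bubbleExtension _ _ _ _).trans (by simp [hx₀])
  · have hedge : dist (a 0) (a 1) * ∫ x in segment ℝ (a 0) (a 1), φ x ^ 2 ∂μH[1] =
        dist (a 0) (a 1) ^ 2 * ∫ t in Set.Icc (0 : ℝ) 1, q.eval t ^ 2 := by
      rw [setIntegral_sq_edge hφ]
      ring
    obtain ⟨hlower, hupper⟩ := hequiv a hreg L hL q hq
    rw [mul_assoc, mul_assoc, inv_mul_le_iff₀ (by positivity), ← Real.sqrt_mul dist_nonneg,
      ← Real.sqrt_mul hN.le, ← Real.sqrt_mul hN.le, hedge]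
    exact ⟨Real.sqrt_le_sqrt hlower, Real.sqrt_le_sqrt hupper⟩
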